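/- For the weight vectors w^min = (0,2,2,1,0,1,1,2,1,2,0,1,1,1) and w^reg = (0,3,4,3,0,2,2,4,3,5,0,1,2,3) in ℝ^14 (the weight vectors associated to the FFLV polytope of Flag_4), one has init_{w^min}(I_4) = init_{w^reg}(I_4), and this initial ideal is a prime ideal generated by binomials. -/

import Mathlib

open MvPolynomial

/-- The weight of a monomial exponent `u` with respect to a weight vector `w`. -/
noncomputable def wt {N : ℕ} (w : Fin N → ℝ) (u : Fin N →₀ ℕ) : ℝ :=
  ∑ i, w i * (u i : ℝ)

open Classical in
/-- The initial form of a polynomial `f` with respect to a weight vector `w`: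
the sum of the terms whose weight is minimal among the terms of `f`. -/
noncomputable def initialForm {N : ℕ} (w : Fin N → ℝ) (f : MvPolynomial (Fin N) ℂ) :
    MvPolynomial (Fin N) ℂ :=
  ∑ u ∈ f.support, if ∀ v ∈ f.support, wt w u ≤ wt w v then monomial u (coeff u f) else 0

/-- The initial ideal of `I` with respect to a weight vector `w`. -/
noncomputable def initialIdeal {N : ℕ} (w : Fin N → ℝ) (I : Ideal (MvPolynomial (Fin N) ℂ)) :
    Ideal (MvPolynomial (Fin N) ℂ) :=
  Ideal.span {g | ∃ f ∈ I, f ≠ 0 ∧ g = initialForm w f}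

/-- An ideal is binomial if it is generated by polynomials with at most two terms. -/
def IsBinomialIdeal {N : ℕ} (I : Ideal (MvPolynomial (Fin N) ℂ)) : Prop :=
  ∃ S : Set (MvPolynomial (Fin N) ℂ), I = Ideal.span S ∧ ∀ f ∈ S, f.support.card ≤ 2

/-- The Plücker minor: the determinant of the submatrix of the `r × c` matrix of
indeterminates `(x_{i,j})` with row indices `1, …, |J|` and column indices the elements
of `J` in increasing order. -/
noncomputable def pluckerMinor (r c : ℕ) (J : Finset (Fin c)) (h : J.card ≤ r) :
    MvPolynomial (Fin r × Fin c) ℂ :=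
  (Matrix.of fun a b : Fin J.card =>
    MvPolynomial.X (Fin.castLE h a, ((J.orderIsoOfFin rfl b : Fin c)))).det

/-- The 14 nonempty proper subsets of `{1,2,3,4}` in the order
`p₁,p₂,p₃,p₄,p₁₂,p₁₃,p₁₄,p₂₃,p₂₄,p₃₄,p₁₂₃,p₁₂₄,p₁₃₄,p₂₃₄`. -/
def subsets4 : Fin 14 → Finset (Fin 4) :=
  ![{0}, {1}, {2}, {3}, {0, 1}, {0, 2}, {0, 3}, {1, 2}, {1, 3}, {2, 3},
    {0, 1, 2}, {0, 1, 3}, {0, 2, 3}, {1, 2, 3}]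

lemma subsets4_card : ∀ i : Fin 14, (subsets4 i).card ≤ 3 := by decide

/-- The map `φ₄` sending each Plücker variable `p_J` to the corresponding minor of the
`3 × 4` matrix of indeterminates. -/
noncomputable def phi4 : MvPolynomial (Fin 14) ℂ →ₐ[ℂ] MvPolynomial (Fin 3 × Fin 4) ℂ :=
  MvPolynomial.aeval fun i => pluckerMinor 3 4 (subsets4 i) (subsets4_card i)

/-- The defining ideal `I₄` of the flag variety `Flag₄` in its Plücker embedding. -/
noncomputable def I4 : Ideal (MvPolynomial (Fin 14) ℂ) := RingHom.ker phi4.toRingHom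

/-!
Restrict the flag minors to upper triangular matrices and give the nine remaining entries weights
for which antidiagonals are lighter than diagonals. Every minor then has a single lightest term,
and the initial ideal of `I₄` for the induced weights on the Plücker variables is contained in the
toric ideal of the relations among these lightest terms. Conversely, ten quadratic Plücker relations
have binomial initial forms for all such weights. Read as rewriting rules, these binomials reduce
every polynomial to a combination of standard monomials, and distinct standard monomials have
distinct images under the toric parametrization. Hence the binomials already generate the toric
ideal, the initial ideal lies between the two, and all three coincide. Both `w^min` and `w^reg` are
induced by antidiagonal weights.
-/

namespace FFLV

open scoped Pointwise

section InitialPart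

variable {σ τ R M : Type*} [CommRing R] [AddCommMonoid M] [PartialOrder M]
  {w : σ → M} {c c' : M} {f f' g g' p q : MvPolynomial σ R}

/-- The polynomials all of whose terms have weight strictly larger than `c`. -/
noncomputable def higherTerms (R : Type*) [CommRing R] (w : σ → M) (c : M) :
    Submodule R (MvPolynomial σ R) :=
  restrictSupport R {u | c < Finsupp.weight w u}

/-- `g` is the part of `f` of weight `c`, and all other terms of `f` are heavier. If `g ≠ 0`, this
says that `g` is the initial form of `f`; allowing `g = 0` makes the notion multiplicative. -/
structure HasInitialPart (w : σ → M) (c : M) (f g : MvPolynomial σ R) : Prop where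
  isWeightedHomogeneous : IsWeightedHomogeneous w g c
  sub_mem : f - g ∈ higherTerms R w c

lemma mul_mem_restrictSupport {s t v : Set (σ →₀ ℕ)} (hp : p ∈ restrictSupport R s)
    (hq : q ∈ restrictSupport R t) (h : s + t ⊆ v) : p * q ∈ restrictSupport R v :=
  restrictSupport_mono R h (restrictSupport_add (R := R) s t ▸ Submodule.mul_mem_mul hp hq)

lemma mem_higherTerms_iff : f ∈ higherTerms R w c ↔ ∀ u ∈ f.support, c < Finsupp.weight w u :=
  Iff.rfl

lemma mem_higherTerms_of_lt (hg : IsWeightedHomogeneous w g c') (hc : c < c') :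
    g ∈ higherTerms R w c :=
  mem_higherTerms_iff.2 fun _ hu ↦ hc.trans_eq (hg (mem_support_iff.1 hu)).symm

lemma X_mul_X_mem_higherTerms {a b : σ} (h : c < w a + w b) : X a * X b ∈ higherTerms R w c :=
  mem_higherTerms_of_lt ((isWeightedHomogeneous_X R w a).mul (isWeightedHomogeneous_X R w b)) h

lemma eq_zero_of_mem_higherTerms (hg : IsWeightedHomogeneous w g c)
    (h : g ∈ higherTerms R w c) : g = 0 :=
  support_eq_empty.1 <| Finset.eq_empty_of_forall_notMem fun _ hu ↦
    (mem_higherTerms_iff.1 h _ hu).ne' (hg (mem_support_iff.1 hu))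

namespace HasInitialPart

lemma of_add (hg : IsWeightedHomogeneous w g c) (hp : p ∈ higherTerms R w c) :
    HasInitialPart w c (g + p) g :=
  ⟨hg, by rwa [add_sub_cancel_left]⟩

lemma refl (hg : IsWeightedHomogeneous w g c) : HasInitialPart w c g g :=
  ⟨hg, by simp⟩

lemma eq_zero (h : HasInitialPart w c 0 g) : g = 0 :=
  eq_zero_of_mem_higherTerms h.isWeightedHomogeneous (by simpa using neg_mem h.sub_mem)

lemma mem_restrictSupport (h : HasInitialPart w c f g) :
    f ∈ restrictSupport R {u | c ≤ Finsupp.weight w u} := by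
  have hg : g ∈ restrictSupport R {u | c ≤ Finsupp.weight w u} :=
    fun u hu ↦ (h.isWeightedHomogeneous (mem_support_iff.1 hu)).ge
  have hfg : f - g ∈ restrictSupport R {u | c ≤ Finsupp.weight w u} :=
    restrictSupport_mono R (fun _ hu ↦ le_of_lt hu) h.sub_mem
  simpa using add_mem hfg hg

lemma mem_higherTerms (h : HasInitialPart w c' f g) (hc : c < c') : f ∈ higherTerms R w c :=
  restrictSupport_mono R (fun _ hu ↦ hc.trans_le hu) h.mem_restrictSupport

lemma sum {ι : Type*} {s : Finset ι} {f g : ι → MvPolynomial σ R}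
    (h : ∀ i ∈ s, HasInitialPart w c (f i) (g i)) :
    HasInitialPart w c (∑ i ∈ s, f i) (∑ i ∈ s, g i) where
  isWeightedHomogeneous := .sum s g c fun i hi ↦ (h i hi).isWeightedHomogeneous
  sub_mem := by
    rw [← Finset.sum_sub_distrib]
    exact sum_mem fun i hi ↦ (h i hi).sub_mem

lemma C_mul (r : R) (h : HasInitialPart w c f g) : HasInitialPart w c (C r * f) (C r * g) where
  isWeightedHomogeneous := h.isWeightedHomogeneous.C_mul r
  sub_mem := by
    rw [← mul_sub, C_mul']
    exact Submodule.smul_mem _ r h.sub_mem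

variable [IsOrderedCancelAddMonoid M]

lemma mul (h : HasInitialPart w c f g) (h' : HasInitialPart w c' f' g') :
    HasInitialPart w (c + c') (f * f') (g * g') where
  isWeightedHomogeneous := h.isWeightedHomogeneous.mul h'.isWeightedHomogeneous
  sub_mem := by
    have hleft : f * (f' - g') ∈ higherTerms R w (c + c') := by
      refine mul_mem_restrictSupport h.mem_restrictSupport h'.sub_mem ?_
      rintro _ ⟨u, hu, v, hv, rfl⟩
      simpa using add_lt_add_of_le_of_lt hu hv
    have hright : (f - g) * g' ∈ higherTerms R w (c + c') := by
      refine mul_mem_restrictSupport h.sub_mem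
        (refl h'.isWeightedHomogeneous).mem_restrictSupport ?_
      rintro _ ⟨u, hu, v, hv, rfl⟩
      simpa using add_lt_add_of_lt_of_le hu hv
    convert add_mem hleft hright using 1
    ring

lemma pow (h : HasInitialPart w c f g) (n : ℕ) : HasInitialPart w (n • c) (f ^ n) (g ^ n) := by
  induction n with
  | zero => simpa using refl (isWeightedHomogeneous_one R w)
  | succ n ih => simpa only [pow_succ, succ_nsmul] using ih.mul h

lemma prod {ι : Type*} {s : Finset ι} {c : ι → M} {f g : ι → MvPolynomial σ R}
    (h : ∀ i ∈ s, HasInitialPart w (c i) (f i) (g i)) :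
    HasInitialPart w (∑ i ∈ s, c i) (∏ i ∈ s, f i) (∏ i ∈ s, g i) := by
  classical
  induction s using Finset.induction_on with
  | empty => simpa using refl (isWeightedHomogeneous_one R w)
  | insert i s hi ih =>
    rw [Finset.sum_insert hi, Finset.prod_insert hi, Finset.prod_insert hi]
    exact (h i (Finset.mem_insert_self i s)).mul
      (ih fun j hj ↦ h j (Finset.mem_insert_of_mem hj))

variable {v : τ → M} {φ ψ : σ → MvPolynomial τ R}

lemma aeval_monomial (h : ∀ i, HasInitialPart v (w i) (φ i) (ψ i)) (u : σ →₀ ℕ) (r : R) :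
    HasInitialPart v (Finsupp.weight w u) (aeval φ (monomial u r)) (aeval ψ (monomial u r)) := by
  simp only [MvPolynomial.aeval_monomial, algebraMap_eq]
  exact (prod fun i _ ↦ (h i).pow (u i)).C_mul r

lemma aeval (h : ∀ i, HasInitialPart v (w i) (φ i) (ψ i)) (hf : HasInitialPart w c f g) :
    HasInitialPart v c (aeval φ f) (aeval ψ g) := by
  have hg : HasInitialPart v c (MvPolynomial.aeval φ g) (MvPolynomial.aeval ψ g) := by
    rw [g.as_sum, map_sum, map_sum]
    exact sum fun u hu ↦
      hf.isWeightedHomogeneous (mem_support_iff.1 hu) ▸ aeval_monomial h u _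
  have hfg : MvPolynomial.aeval φ (f - g) ∈ higherTerms R v c := by
    rw [(f - g).as_sum, map_sum]
    exact sum_mem fun u hu ↦ (aeval_monomial h u _).mem_higherTerms
      (mem_higherTerms_iff.1 hf.sub_mem u hu)
  refine ⟨hg.isWeightedHomogeneous, ?_⟩
  simpa [map_sub] using add_mem hfg hg.sub_mem

end HasInitialPart

end InitialPart

section InitialIdeal

variable {N : ℕ} {w : Fin N → ℝ} {c : ℝ} {f g : MvPolynomial (Fin N) ℂ}

lemma wt_eq_weight (w : Fin N → ℝ) (u : Fin N →₀ ℕ) : wt w u = Finsupp.weight w u := by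
  simp [wt, Finsupp.weight_eq_sum, mul_comm]

lemma initialForm_eq_weightedHomogeneousComponent (w : Fin N → ℝ) {u : Fin N →₀ ℕ}
    (hu : u ∈ f.support) (hmin : ∀ v ∈ f.support, Finsupp.weight w u ≤ Finsupp.weight w v) :
    initialForm w f = weightedHomogeneousComponent w (Finsupp.weight w u) f := by
  classical
  rw [initialForm, weightedHomogeneousComponent_apply, Finset.sum_filter]
  refine Finset.sum_congr rfl fun v hv ↦ if_congr ?_ rfl rfl
  simp only [wt_eq_weight]
  exact ⟨fun h ↦ (h u hu).antisymm (hmin v hv), fun h ↦ h ▸ hmin⟩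

lemma exists_hasInitialPart_initialForm (w : Fin N → ℝ) (hf : f ≠ 0) :
    ∃ c, HasInitialPart w c f (initialForm w f) := by
  classical
  obtain ⟨u, hu, hmin⟩ :=
    Finset.exists_min_image f.support (Finsupp.weight w) (support_nonempty.2 hf)
  refine ⟨Finsupp.weight w u, ?_⟩
  rw [initialForm_eq_weightedHomogeneousComponent w hu hmin]
  refine ⟨weightedHomogeneousComponent_isWeightedHomogeneous _ _,
    mem_higherTerms_iff.2 fun v hv ↦ ?_⟩
  rw [mem_support_iff, coeff_sub, coeff_weightedHomogeneousComponent] at hv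
  split_ifs at hv with h
  · simp at hv
  · exact (hmin v (mem_support_iff.2 (by simpa using hv))).lt_of_ne' h

lemma HasInitialPart.initialForm_eq (h : HasInitialPart w c f g) (hg : g ≠ 0) :
    initialForm w f = g := by
  classical
  have hcoeff : ∀ v, Finsupp.weight w v = c → coeff v f = coeff v g := fun v hv ↦ by
    by_contra hne
    have hv' : v ∈ (f - g).support := by simpa [sub_eq_zero] using hne
    exact (mem_higherTerms_iff.1 h.sub_mem v hv').ne' hv
  obtain ⟨u, hu⟩ := support_nonempty.2 hg
  have huc : Finsupp.weight w u = c := h.isWeightedHomogeneous (mem_support_iff.1 hu)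
  rw [initialForm_eq_weightedHomogeneousComponent w (u := u), huc]
  · ext v
    rw [coeff_weightedHomogeneousComponent]
    split_ifs with hv
    · exact hcoeff v hv
    · exact (h.isWeightedHomogeneous.coeff_eq_zero v hv).symm
  · rwa [mem_support_iff, hcoeff u huc, ← mem_support_iff]
  · exact fun v hv ↦ huc ▸ h.mem_restrictSupport hv

lemma HasInitialPart.mem_initialIdeal {I : Ideal (MvPolynomial (Fin N) ℂ)}
    (h : HasInitialPart w c f g) (hf : f ∈ I) : g ∈ initialIdeal w I := by
  rcases eq_or_ne g 0 with rfl | hg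
  · exact zero_mem _
  · have hf0 : f ≠ 0 := by
      rintro rfl
      exact hg h.eq_zero
    exact Ideal.subset_span ⟨f, hf, hf0, (h.initialForm_eq hg).symm⟩

lemma initialIdeal_mono (w : Fin N → ℝ) {I J : Ideal (MvPolynomial (Fin N) ℂ)} (h : I ≤ J) :
    initialIdeal w I ≤ initialIdeal w J :=
  Ideal.span_mono fun _ ⟨f, hf, hf0, hg⟩ ↦ ⟨f, h hf, hf0, hg⟩

theorem initialIdeal_ker_aeval_le {τ : Type*} {v : τ → ℝ} {φ ψ : Fin N → MvPolynomial τ ℂ}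
    (h : ∀ i, HasInitialPart v (w i) (φ i) (ψ i)) :
    initialIdeal w (RingHom.ker (aeval φ)) ≤ RingHom.ker (aeval ψ) := by
  refine Ideal.span_le.2 ?_
  rintro _ ⟨f, hf, hf0, rfl⟩
  obtain ⟨c, hc⟩ := exists_hasInitialPart_initialForm w hf0
  have hmap := HasInitialPart.aeval h hc
  rw [(RingHom.mem_ker).1 hf] at hmap
  exact RingHom.mem_ker.2 hmap.eq_zero

end InitialIdeal

section Straightening

variable {σ τ κ R : Type*} [CommRing R] {α β : κ → σ →₀ ℕ} {c : κ → R}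

/-- The ideal of the rewriting rules `x ^ α k ↦ c k * x ^ β k`. -/
noncomputable def straighteningIdeal (α β : κ → σ →₀ ℕ) (c : κ → R) : Ideal (MvPolynomial σ R) :=
  Ideal.span (Set.range fun k ↦ monomial (α k) 1 - monomial (β k) (c k))

/-- The exponents of the monomials to which no rewriting rule with left-hand sides `α` applies. -/
def standardExponents (α : κ → σ →₀ ℕ) : Set (σ →₀ ℕ) :=
  {u | ∀ k, ¬ α k ≤ u}

lemma exists_standard_monomial_sub_mem (c : κ → R) (ω : σ → ℕ)
    (hω : ∀ k, Finsupp.weight ω (β k) < Finsupp.weight ω (α k)) (u : σ →₀ ℕ) :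
    ∃ v ∈ standardExponents α, ∃ r : R,
      monomial u 1 - monomial v r ∈ straighteningIdeal α β c := by
  induction hn : Finsupp.weight ω u using Nat.strong_induction_on generalizing u with
  | _ n ih =>
    by_cases hu : u ∈ standardExponents α
    · exact ⟨u, hu, 1, by simp⟩
    obtain ⟨k, hk⟩ : ∃ k, α k ≤ u := by simpa [standardExponents] using hu
    obtain ⟨m, rfl⟩ := exists_add_of_le hk
    obtain ⟨v, hv, r, hr⟩ := ih _ (by simpa [← hn] using hω k) (β k + m) rfl
    refine ⟨v, hv, c k * r, ?_⟩
    have hrule : monomial (α k) 1 - monomial (β k) (c k) ∈ straighteningIdeal α β c :=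
      Ideal.subset_span ⟨k, rfl⟩
    convert add_mem (Ideal.mul_mem_left _ (monomial m 1) hrule)
      (Ideal.mul_mem_left _ (C (c k)) hr) using 1
    simp only [mul_sub, monomial_mul, C_mul_monomial, mul_one, one_mul, add_comm m]
    ring

lemma exists_standard_sub_mem (c : κ → R) (ω : σ → ℕ)
    (hω : ∀ k, Finsupp.weight ω (β k) < Finsupp.weight ω (α k)) (f : MvPolynomial σ R) :
    ∃ g ∈ restrictSupport R (standardExponents α), f - g ∈ straighteningIdeal α β c := by
  induction f using MvPolynomial.induction_on' with
  | monomial u a =>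
    obtain ⟨v, hv, r, hr⟩ := exists_standard_monomial_sub_mem c ω hω u
    refine ⟨monomial v (a * r), (monomial_mem_restrictSupport R).2 (.inl hv), ?_⟩
    simpa [mul_sub, C_mul_monomial] using Ideal.mul_mem_left _ (C a) hr
  | add p q hp hq =>
    obtain ⟨g, hg, hpg⟩ := hp
    obtain ⟨h, hh, hqh⟩ := hq
    exact ⟨g + h, add_mem hg hh, by simpa only [add_sub_add_comm] using add_mem hpg hqh⟩

variable {A : σ → τ →₀ ℕ} {ε : σ → R}

lemma aeval_monomials_monomial (A : σ → τ →₀ ℕ) (ε : σ → R) (u : σ →₀ ℕ) (r : R) :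
    aeval (fun i ↦ monomial (A i) (ε i)) (monomial u r) =
      monomial (Finsupp.weight A u) (r * u.prod fun i n ↦ ε i ^ n) := by
  simp only [aeval_monomial, monomial_pow, algebraMap_eq, Finsupp.prod, ← monomial_sum_prod,
    C_mul_monomial, Finsupp.weight_apply, Finsupp.sum]

lemma eq_zero_of_aeval_monomials_eq_zero [IsDomain R] (hε : ∀ i, ε i ≠ 0) {f : MvPolynomial σ R}
    (hinj : Set.InjOn (Finsupp.weight A : (σ →₀ ℕ) → τ →₀ ℕ) f.support)
    (hf : aeval (fun i ↦ monomial (A i) (ε i)) f = 0) : f = 0 := by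
  classical
  ext u
  by_contra hu
  replace hu : u ∈ f.support := mem_support_iff.2 hu
  have hcoeff : coeff (Finsupp.weight A u) (aeval (fun i ↦ monomial (A i) (ε i)) f) =
      coeff u f * u.prod fun i n ↦ ε i ^ n := by
    conv_lhs => rw [f.as_sum]
    simp only [map_sum, aeval_monomials_monomial, coeff_sum, coeff_monomial]
    rw [Finset.sum_eq_single_of_mem u hu fun v hv hvu ↦ if_neg fun h ↦ hvu (hinj hv hu h),
      if_pos rfl]
  rw [hf, coeff_zero] at hcoeff
  exact mul_ne_zero (mem_support_iff.1 hu)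
    (Finset.prod_ne_zero_iff.2 fun i _ ↦ pow_ne_zero _ (hε i)) hcoeff.symm

theorem ker_aeval_monomials_eq_straighteningIdeal [IsDomain R] (hε : ∀ i, ε i ≠ 0) (ω : σ → ℕ)
    (hω : ∀ k, Finsupp.weight ω (β k) < Finsupp.weight ω (α k))
    (hinj : Set.InjOn (Finsupp.weight A) (standardExponents α))
    (hle : straighteningIdeal α β c ≤ RingHom.ker (aeval fun i ↦ monomial (A i) (ε i))) :
    RingHom.ker (aeval fun i ↦ monomial (A i) (ε i)) = straighteningIdeal α β c := by
  refine le_antisymm (fun f hf ↦ ?_) hle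
  obtain ⟨g, hg, hfg⟩ := exists_standard_sub_mem c ω hω f
  have hg0 : g = 0 := eq_zero_of_aeval_monomials_eq_zero hε (hinj.mono hg) <| RingHom.mem_ker.1 <|
    sub_sub_cancel f g ▸ sub_mem hf (hle hfg)
  simpa [hg0] using hfg

lemma isBinomialIdeal_straighteningIdeal {N : ℕ} (α β : κ → Fin N →₀ ℕ) (c : κ → ℂ) :
    IsBinomialIdeal (straighteningIdeal α β c) := by
  classical
  refine ⟨_, rfl, ?_⟩
  rintro _ ⟨k, rfl⟩
  calc _ ≤ Finset.card ({α k} ∪ {β k}) := Finset.card_le_card <| (support_sub _ _ _).trans <|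
        Finset.union_subset_union support_monomial_subset support_monomial_subset
    _ ≤ 2 := Finset.card_le_two

end Straightening

section FlagMinors

lemma aeval_pluckerMinor {S : Type*} [CommRing S] [Algebra ℂ S] {r c k : ℕ}
    (M : Matrix (Fin r) (Fin c) S) {J : Finset (Fin c)} (h : J.card ≤ r) (hk : k ≤ r)
    {e : Fin k → Fin c} (he : StrictMono e) (hJ : J = Finset.univ.image e) :
    aeval (fun p ↦ M p.1 p.2) (pluckerMinor r c J h) = (M.submatrix (Fin.castLE hk) e).det := by
  obtain rfl : J.card = k := by rw [hJ, Finset.card_image_of_injective _ he.injective]; simp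
  obtain rfl := Finset.orderEmbOfFin_unique rfl
    (fun i ↦ hJ ▸ Finset.mem_image_of_mem e (Finset.mem_univ i)) he
  rw [pluckerMinor, AlgHom.map_det]
  congr 1
  ext i j
  simp

variable {S : Type*} [CommRing S]

/-- The minors of a `3 × 4` matrix on initial rows, in the order of `subsets4`. -/
def flagMinors (M : Matrix (Fin 3) (Fin 4) S) : Fin 14 → S :=
  let m₂ (a b : Fin 4) := M 0 a * M 1 b - M 0 b * M 1 a
  let m₃ (a b c : Fin 4) := (M.submatrix id ![a, b, c]).det
  ![M 0 0, M 0 1, M 0 2, M 0 3, m₂ 0 1, m₂ 0 2, m₂ 0 3, m₂ 1 2, m₂ 1 3, m₂ 2 3,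
    m₃ 0 1 2, m₃ 0 1 3, m₃ 0 2 3, m₃ 1 2 3]

variable [Algebra ℂ S]

lemma aeval_phi4_X (M : Matrix (Fin 3) (Fin 4) S) (i : Fin 14) :
    aeval (fun p ↦ M p.1 p.2) (phi4 (X i)) = flagMinors M i := by
  have h₁ (j : Fin 4) (hj) : aeval (fun p ↦ M p.1 p.2) (pluckerMinor 3 4 {j} hj) = M 0 j := by
    rw [aeval_pluckerMinor M hj (by simp) (Subsingleton.strictMono ![j]) (by simp)]
    simp
  have h₂ {J} (hJ) (a b : Fin 4) (hab : StrictMono ![a, b])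
      (hJab : J = Finset.univ.image ![a, b]) :
      aeval (fun p ↦ M p.1 p.2) (pluckerMinor 3 4 J hJ) = M 0 a * M 1 b - M 0 b * M 1 a := by
    rw [aeval_pluckerMinor M hJ (by simp) hab hJab, Matrix.det_fin_two]
    rfl
  have h₃ {J} (hJ) (a b c : Fin 4) (habc : StrictMono ![a, b, c])
      (hJabc : J = Finset.univ.image ![a, b, c]) :
      aeval (fun p ↦ M p.1 p.2) (pluckerMinor 3 4 J hJ) = (M.submatrix id ![a, b, c]).det :=
    aeval_pluckerMinor M hJ le_rfl habc hJabc
  rw [phi4, aeval_X]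
  fin_cases i
  iterate 4 exact h₁ _ _
  iterate 6 exact h₂ _ _ _ (by decide) (by decide)
  iterate 4 exact h₃ _ _ _ _ (by decide) (by decide)

lemma aeval_comp_phi4 (M : Matrix (Fin 3) (Fin 4) S) :
    (aeval fun p ↦ M p.1 p.2).comp phi4 = aeval (flagMinors M) := by
  ext i
  simp [aeval_phi4_X]

lemma phi4_eq_aeval_flagMinors : phi4 = aeval (flagMinors (.of fun i j ↦ X (i, j))) := by
  rw [← aeval_comp_phi4]
  simp

lemma I4_le_ker_aeval_flagMinors (M : Matrix (Fin 3) (Fin 4) S) :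
    I4 ≤ RingHom.ker (aeval (R := ℂ) (flagMinors M)) := by
  intro f hf
  rw [RingHom.mem_ker, ← aeval_comp_phi4, AlgHom.comp_apply, show phi4 f = 0 from hf, map_zero]

end FlagMinors

section PluckerRelations

/-- The pairs `(J, K)`, numbered as in `subsets4`, whose product `p_J p_K` is rewritten by one of
the ten quadratic Plücker relations used for straightening. -/
def leadingPair : Fin 10 → Fin 14 × Fin 14 :=
  ![(2, 4), (3, 4), (3, 5), (3, 7), (5, 8), (3, 10), (6, 10), (8, 10), (9, 10), (6, 13)]

/-- The pairs `(J, K)` such that `± p_J p_K` replaces the monomial of `leadingPair`. -/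
def standardPair : Fin 10 → Fin 14 × Fin 14 :=
  ![(0, 7), (0, 8), (0, 9), (2, 8), (4, 9), (0, 13), (4, 12), (4, 13), (5, 13), (8, 12)]

/-- The coefficient with which the monomial of `standardPair` replaces that of `leadingPair`. -/
def pairSign : Fin 10 → ℂ := ![-1, -1, -1, 1, 1, 1, -1, -1, -1, 1]

/-- The exponent of the quadratic monomial `p_J p_K` attached to a pair `(J, K)`. -/
noncomputable def pairExponent (p : Fin 14 × Fin 14) : Fin 14 →₀ ℕ :=
  Finsupp.single p.1 1 + Finsupp.single p.2 1

lemma monomial_pairExponent (p : Fin 14 × Fin 14) (r : ℂ) :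
    monomial (pairExponent p) r = C r * (X p.1 * X p.2) := by
  simp [pairExponent, X, monomial_mul, C_mul_monomial]

lemma weight_pairExponent {M : Type*} [AddCommMonoid M] (w : Fin 14 → M) (p : Fin 14 × Fin 14) :
    Finsupp.weight w (pairExponent p) = w p.1 + w p.2 := by
  simp [pairExponent, Finsupp.weight_single]

/-- The two terms of the `k`-th Plücker relation that survive in the degeneration. -/
noncomputable def binomialPart (k : Fin 10) : MvPolynomial (Fin 14) ℂ :=
  monomial (pairExponent (leadingPair k)) 1 - monomial (pairExponent (standardPair k)) (pairSign k)

/-- The remaining, heavier terms of the `k`-th Plücker relation. -/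
noncomputable def relationTail : Fin 10 → MvPolynomial (Fin 14) ℂ :=
  ![-(X 1 * X 5), -(X 1 * X 6), -(X 2 * X 6), X 1 * X 9, -(X 6 * X 7),
    X 1 * X 12 - X 2 * X 11, -(X 5 * X 11), -(X 7 * X 11), -(X 7 * X 12), X 9 * X 11]

lemma relation_mem_I4 (k : Fin 10) : binomialPart k + relationTail k ∈ I4 := by
  rw [I4, phi4_eq_aeval_flagMinors]
  change aeval _ _ = 0
  simp only [binomialPart, monomial_pairExponent]
  fin_cases k <;>
    simp [leadingPair, standardPair, pairSign, relationTail, flagMinors, Matrix.det_fin_three] <;>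
    ring

/-- The ideal generated by the binomials `binomialPart k`. -/
noncomputable def pluckerStraighteningIdeal : Ideal (MvPolynomial (Fin 14) ℂ) :=
  straighteningIdeal (pairExponent ∘ leadingPair) (pairExponent ∘ standardPair) pairSign

end PluckerRelations

section ToricDegeneration

/-- The entries of `triangularMatrix` whose product is, up to sign, the lightest term of each flag
minor, when antidiagonals are lighter than diagonals. -/
def leadingEntries : Fin 14 → Finset (Fin 9) :=
  ![{0}, {1}, {2}, {3}, {0, 4}, {0, 5}, {0, 6}, {2, 4}, {3, 4}, {3, 5},
    {0, 4, 7}, {0, 4, 8}, {0, 6, 7}, {3, 4, 7}]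

/-- The sign with which the product of `leadingEntries` occurs in the flag minor. -/
def leadingSign : Fin 14 → ℂ := ![1, 1, 1, 1, 1, 1, 1, -1, -1, -1, 1, 1, -1, 1]

/-- The exponent of the squarefree monomial with variables `leadingEntries i`. -/
noncomputable def leadingExponent (i : Fin 14) : Fin 9 →₀ ℕ :=
  ∑ j ∈ leadingEntries i, Finsupp.single j 1

/-- The toric ideal of relations among the leading terms of the flag minors. -/
noncomputable def toricIdeal : Ideal (MvPolynomial (Fin 14) ℂ) :=
  RingHom.ker (aeval (R := ℂ) fun i ↦ monomial (leadingExponent i) (leadingSign i))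

/-- The weight vector on the Plücker variables induced by weights on the entries of
`triangularMatrix`: the weights of the leading terms of the flag minors. -/
noncomputable def pluckerWeight (d : Fin 9 → ℝ) (i : Fin 14) : ℝ :=
  ∑ j ∈ leadingEntries i, d j

/-- Weights on the entries of `triangularMatrix` for which, in each of the three contiguous
`2 × 2` blocks without a zero, the antidiagonal is strictly lighter than the diagonal. -/
structure IsAntidiagonal (d : Fin 9 → ℝ) : Prop where
  block₁ : d 2 + d 4 < d 1 + d 5
  block₂ : d 3 + d 5 < d 2 + d 6
  block₃ : d 6 + d 7 < d 5 + d 8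

/-- The generic upper triangular `3 × 4` matrix, with variables numbered row by row. -/
noncomputable def triangularMatrix : Matrix (Fin 3) (Fin 4) (MvPolynomial (Fin 9) ℂ) :=
  !![X 0, X 1, X 2, X 3; 0, X 4, X 5, X 6; 0, 0, X 7, X 8]

/-- The terms of the flag minors of `triangularMatrix` other than the leading one. -/
noncomputable def minorTail : Fin 14 → MvPolynomial (Fin 9) ℂ :=
  ![0, 0, 0, 0, 0, 0, 0, X 1 * X 5, X 1 * X 6, X 2 * X 6, 0, 0, X 0 * X 5 * X 8,
    X 1 * X 5 * X 8 - X 1 * X 6 * X 7 - X 2 * X 4 * X 8]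

lemma monomial_leadingExponent (i : Fin 14) (r : ℂ) :
    monomial (leadingExponent i) r = C r * ∏ j ∈ leadingEntries i, X j := by
  rw [leadingExponent, ← mul_one r, ← C_mul_monomial, monomial_sum_one]
  simp [X]

lemma flagMinors_triangularMatrix (i : Fin 14) :
    flagMinors triangularMatrix i =
      monomial (leadingExponent i) (leadingSign i) + minorTail i := by
  rw [monomial_leadingExponent]
  fin_cases i <;>
    simp [flagMinors, triangularMatrix, leadingEntries, leadingSign, minorTail,
      Matrix.det_fin_three] <;> ring

variable {d : Fin 9 → ℝ}

lemma minorTail_mem_higherTerms (hd : IsAntidiagonal d) (i : Fin 14) :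
    minorTail i ∈ higherTerms ℂ d (pluckerWeight d i) := by
  obtain ⟨h₁, h₂, h₃⟩ := hd
  have hX (a b e : Fin 9) {c : ℝ} (hc : c < d a + d b + d e) :
      X a * X b * X e ∈ higherTerms ℂ d c :=
    mem_higherTerms_of_lt (((isWeightedHomogeneous_X ℂ d a).mul
      (isWeightedHomogeneous_X ℂ d b)).mul (isWeightedHomogeneous_X ℂ d e)) hc
  fin_cases i <;> simp only [minorTail, pluckerWeight, leadingEntries]
  iterate 7 exact zero_mem _
  iterate 3 exact X_mul_X_mem_higherTerms (by simp; linarith)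
  iterate 2 exact zero_mem _
  · exact hX _ _ _ (by simp; linarith)
  · exact sub_mem (sub_mem (hX _ _ _ (by simp; linarith)) (hX _ _ _ (by simp; linarith)))
      (hX _ _ _ (by simp; linarith))

lemma hasInitialPart_flagMinors (hd : IsAntidiagonal d) (i : Fin 14) :
    HasInitialPart d (pluckerWeight d i) (flagMinors triangularMatrix i)
      (monomial (leadingExponent i) (leadingSign i)) := by
  rw [flagMinors_triangularMatrix]
  refine .of_add (isWeightedHomogeneous_monomial _ _ _ ?_) (minorTail_mem_higherTerms hd i)
  simp [leadingExponent, pluckerWeight, Finsupp.weight_single]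

lemma initialIdeal_I4_le_toricIdeal (hd : IsAntidiagonal d) :
    initialIdeal (pluckerWeight d) I4 ≤ toricIdeal :=
  (initialIdeal_mono _ (I4_le_ker_aeval_flagMinors triangularMatrix)).trans
    (initialIdeal_ker_aeval_le (hasInitialPart_flagMinors hd))

lemma isWeightedHomogeneous_binomialPart (d : Fin 9 → ℝ) (k : Fin 10) :
    IsWeightedHomogeneous (pluckerWeight d) (binomialPart k)
      (Finsupp.weight (pluckerWeight d) (pairExponent (standardPair k))) := by
  have hweight : Finsupp.weight (pluckerWeight d) (pairExponent (leadingPair k)) =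
      Finsupp.weight (pluckerWeight d) (pairExponent (standardPair k)) := by
    simp only [weight_pairExponent]
    fin_cases k <;> simp [leadingPair, standardPair, pluckerWeight, leadingEntries] <;> ring
  exact Submodule.sub_mem (weightedHomogeneousSubmodule ℂ _ _)
    (isWeightedHomogeneous_monomial _ _ _ hweight) (isWeightedHomogeneous_monomial _ _ _ rfl)

lemma relationTail_mem_higherTerms (hd : IsAntidiagonal d) (k : Fin 10) :
    relationTail k ∈ higherTerms ℂ (pluckerWeight d)
      (Finsupp.weight (pluckerWeight d) (pairExponent (standardPair k))) := by
  obtain ⟨h₁, h₂, h₃⟩ := hd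
  rw [weight_pairExponent]
  fin_cases k <;> simp only [relationTail]
  on_goal 6 => refine sub_mem (X_mul_X_mem_higherTerms ?_) (X_mul_X_mem_higherTerms ?_)
  on_goal 4 => refine X_mul_X_mem_higherTerms ?_
  on_goal 11 => refine X_mul_X_mem_higherTerms ?_
  any_goals refine neg_mem (X_mul_X_mem_higherTerms ?_)
  all_goals
    simp [standardPair, pluckerWeight, leadingEntries]
    linarith

lemma pluckerStraighteningIdeal_le_initialIdeal (hd : IsAntidiagonal d) :
    pluckerStraighteningIdeal ≤ initialIdeal (pluckerWeight d) I4 := by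
  refine Ideal.span_le.2 ?_
  rintro _ ⟨k, rfl⟩
  exact (HasInitialPart.of_add (isWeightedHomogeneous_binomialPart d k)
    (relationTail_mem_higherTerms hd k)).mem_initialIdeal (relation_mem_I4 k)

end ToricDegeneration

section StandardMonomials

lemma weight_leadingExponent (u : Fin 14 →₀ ℕ) :
    ⇑(Finsupp.weight leadingExponent u) =
      ![u 0 + u 4 + u 5 + u 6 + u 10 + u 11 + u 12, u 1, u 2 + u 7, u 3 + u 8 + u 9 + u 13,
        u 4 + u 7 + u 8 + u 10 + u 11 + u 13, u 5 + u 9, u 6 + u 12, u 10 + u 12 + u 13, u 11] := by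
  ext j
  have hsum : Finsupp.weight leadingExponent u j = ∑ i with j ∈ leadingEntries i, u i := by
    simp [Finsupp.weight_eq_sum, leadingExponent, Finsupp.finsetSum_apply, Finsupp.single_apply,
      Finset.sum_filter]
  rw [hsum, Finset.sum_filter]
  fin_cases j <;> simp [Fin.sum_univ_succ, leadingEntries] <;> ring

lemma eq_zero_or_eq_zero_of_standard {u : Fin 14 →₀ ℕ}
    (hu : u ∈ standardExponents (pairExponent ∘ leadingPair)) (k : Fin 10) :
    u (leadingPair k).1 = 0 ∨ u (leadingPair k).2 = 0 := by
  have hne : (leadingPair k).1 ≠ (leadingPair k).2 := by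
    revert k
    decide
  by_contra! h
  refine hu k fun i ↦ ?_
  simp only [Function.comp_apply, pairExponent, Finsupp.add_apply, Finsupp.single_apply]
  split_ifs <;> grind

/-- The subtractions are truncated: each of them encodes, in a single formula, the alternative as to
which variable of a non-standard pair vanishes. -/
lemma standard_coordinates {u : Fin 14 →₀ ℕ} {m : Fin 9 → ℕ}
    (hu : u ∈ standardExponents (pairExponent ∘ leadingPair))
    (hm : ⇑(Finsupp.weight leadingExponent u) = m) :
    u 10 = m 7 - (m 3 + m 6) ∧ u 6 = m 6 - m 7 ∧ u 3 = m 3 + m 8 - (m 4 + m 5) ∧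
      u 5 = m 5 + u 3 + u 13 - m 3 ∧ u 4 = m 4 - (m 2 + u 8 + u 10 + u 11 + u 13) := by
  have h := eq_zero_or_eq_zero_of_standard hu
  simp [Fin.forall_fin_succ, leadingPair] at h
  rw [weight_leadingExponent] at hm
  subst hm
  refine ⟨?_, ?_, ?_, ?_, ?_⟩ <;> simp <;> grind

lemma injOn_standardExponents :
    Set.InjOn (Finsupp.weight leadingExponent)
      (standardExponents (pairExponent ∘ leadingPair)) := by
  intro u hu v hv huv
  obtain ⟨hu₁₀, hu₆, hu₃, hu₅, hu₄⟩ := standard_coordinates hu rfl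
  obtain ⟨hv₁₀, hv₆, hv₃, hv₅, hv₄⟩ := standard_coordinates hv (congrArg DFunLike.coe huv.symm)
  have hlin := congrArg DFunLike.coe huv
  simp only [weight_leadingExponent, Matrix.vecCons_inj, and_true] at hlin
  have h₁₀ : u 10 = v 10 := hu₁₀.trans hv₁₀.symm
  have h₆ : u 6 = v 6 := hu₆.trans hv₆.symm
  have h₃ : u 3 = v 3 := hu₃.trans hv₃.symm
  have h₁₃ : u 13 = v 13 := by omega
  have h₁₁ : u 11 = v 11 := by omega
  have h₅ : u 5 = v 5 := by rw [hu₅, hv₅, h₃, h₁₃]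
  have h₈ : u 8 = v 8 := by omega
  have h₄ : u 4 = v 4 := by rw [hu₄, hv₄, h₈, h₁₀, h₁₁, h₁₃]
  clear hu₁₀ hu₆ hu₃ hu₅ hu₄ hv₁₀ hv₆ hv₃ hv₅ hv₄
  ext i
  fin_cases i <;> simp <;> omega

end StandardMonomials

section Degeneration

/-- A weight on the Plücker variables that decreases under every straightening rule, so that
rewriting terminates. -/
def straighteningWeight : Fin 14 → ℕ := ![0, 0, 1, 2, 0, 1, 1, 0, 0, 0, 2, 0, 0, 0]

lemma straighteningWeight_standardPair_lt (k : Fin 10) :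
    Finsupp.weight straighteningWeight ((pairExponent ∘ standardPair) k) <
      Finsupp.weight straighteningWeight ((pairExponent ∘ leadingPair) k) := by
  simp only [Function.comp_apply, weight_pairExponent]
  revert k
  decide

lemma leadingSign_ne_zero (i : Fin 14) : leadingSign i ≠ 0 := by
  fin_cases i <;> simp [leadingSign]

lemma isAntidiagonal_min : IsAntidiagonal ![0, 2, 2, 1, 0, 1, 1, 0, 1] := by
  constructor <;> simp

lemma isAntidiagonal_reg : IsAntidiagonal ![0, 3, 4, 3, 0, 2, 2, 0, 1] := by
  constructor <;> simp <;> norm_num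

theorem toricIdeal_eq_pluckerStraighteningIdeal : toricIdeal = pluckerStraighteningIdeal :=
  ker_aeval_monomials_eq_straighteningIdeal leadingSign_ne_zero straighteningWeight
    straighteningWeight_standardPair_lt injOn_standardExponents <|
    (pluckerStraighteningIdeal_le_initialIdeal isAntidiagonal_min).trans
      (initialIdeal_I4_le_toricIdeal isAntidiagonal_min)

theorem initialIdeal_I4_eq_toricIdeal {d : Fin 9 → ℝ} (hd : IsAntidiagonal d) :
    initialIdeal (pluckerWeight d) I4 = toricIdeal :=
  (initialIdeal_I4_le_toricIdeal hd).antisymm <|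
    toricIdeal_eq_pluckerStraighteningIdeal.trans_le
      (pluckerStraighteningIdeal_le_initialIdeal hd)

lemma pluckerWeight_min : pluckerWeight ![0, 2, 2, 1, 0, 1, 1, 0, 1] =
    ![0, 2, 2, 1, 0, 1, 1, 2, 1, 2, 0, 1, 1, 1] := by
  ext i
  fin_cases i <;> simp [pluckerWeight, leadingEntries]
  norm_num

lemma pluckerWeight_reg : pluckerWeight ![0, 3, 4, 3, 0, 2, 2, 0, 1] =
    ![0, 3, 4, 3, 0, 2, 2, 4, 3, 5, 0, 1, 2, 3] := by
  ext i
  fin_cases i <;> simp [pluckerWeight, leadingEntries]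
  norm_num

end Degeneration

end FFLV

open FFLV in
theorem fflv4_initial_ideal_prime_binomial_general {d d' : Fin 9 → ℝ} (hd : IsAntidiagonal d)
    (hd' : IsAntidiagonal d') :
    initialIdeal (pluckerWeight d) I4 = initialIdeal (pluckerWeight d') I4 ∧
    (initialIdeal (pluckerWeight d) I4).IsPrime ∧
    IsBinomialIdeal (initialIdeal (pluckerWeight d) I4) := by
  rw [initialIdeal_I4_eq_toricIdeal hd, initialIdeal_I4_eq_toricIdeal hd']
  refine ⟨rfl, RingHom.ker_isPrime _, ?_⟩
  rw [toricIdeal_eq_pluckerStraighteningIdeal]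
  exact isBinomialIdeal_straighteningIdeal _ _ _

/-- For the weight vectors `w^min` and `w^reg` associated to the FFLV polytope of `Flag₄`,
the initial ideals agree and are binomial prime ideals. -/
theorem fflv4_initial_ideal_prime_binomial :
    initialIdeal ![0, 2, 2, 1, 0, 1, 1, 2, 1, 2, 0, 1, 1, 1] I4 =
      initialIdeal ![0, 3, 4, 3, 0, 2, 2, 4, 3, 5, 0, 1, 2, 3] I4 ∧
    (initialIdeal ![0, 2, 2, 1, 0, 1, 1, 2, 1, 2, 0, 1, 1, 1] I4).IsPrime ∧
    IsBinomialIdeal (initialIdeal ![0, 2, 2, 1, 0, 1, 1, 2, 1, 2, 0, 1, 1, 1] I4) := by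
  simpa only [FFLV.pluckerWeight_min, FFLV.pluckerWeight_reg] using
    fflv4_initial_ideal_prime_binomial_general FFLV.isAntidiagonal_min FFLV.isAntidiagonal_reg
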